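/- (Correctness of the one-bit communication protocol) Let a, b ∈ S² be unit vectors and let λ₀, λ₁ be independent, each uniformly distributed on S². Define λ_s = λ₀ if |a·λ₁| ≤ |a·λ₀| and λ_s = λ₁ otherwise, and set A = -sgn(a·λ_s), B = sgn(b·λ_s). Then for all α, β ∈ {-1, 1}, P(A = α and B = β) = (1 - αβ a·b)/4; that is, the protocol in which Alice performs the choice method and sends Bob the single bit indicating which of λ₀, λ₁ she accepted exactly reproduces the joint outcome distribution of projective measurements a, b on the singlet state. -/

import Mathlib

open MeasureTheory Metric
open scoped RealInnerProductSpace ENNReal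

/-- The unit sphere in ℝ³. -/
noncomputable abbrev Sphere2 := Metric.sphere (0 : EuclideanSpace ℝ (Fin 3)) 1

/-- The surface measure `σ` on the unit sphere of ℝ³ (total mass `4π`). -/
noncomputable def sphereMeasure : Measure Sphere2 :=
  (volume : Measure (EuclideanSpace ℝ (Fin 3))).toSphere

/-- The uniform probability measure `σ/(4π)` on the unit sphere of ℝ³. -/
noncomputable def uniformSphere : Measure Sphere2 :=
  (ENNReal.ofReal (4 * Real.pi))⁻¹ • sphereMeasure

/-- The joint distribution of two independent uniform points `(λ₀, λ₁)` on `S²`. -/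
noncomputable def pairMeasure : Measure (Sphere2 × Sphere2) :=
  uniformSphere.prod uniformSphere

/-- `sgn(x) = 1` if `x ≥ 0`, `-1` if `x < 0`. -/
noncomputable def sgn (x : ℝ) : ℝ := if 0 ≤ x then 1 else -1

/-- The choice method: accept `λ₀` if `|a·λ₁| ≤ |a·λ₀|`, else accept `λ₁`. -/
noncomputable def choice (a : EuclideanSpace ℝ (Fin 3)) (p : Sphere2 × Sphere2) : Sphere2 :=
  if |⟪a, (p.2 : EuclideanSpace ℝ (Fin 3))⟫| ≤ |⟪a, (p.1 : EuclideanSpace ℝ (Fin 3))⟫|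
  then p.1 else p.2

/-!
By Archimedes' hat-box theorem `|a·λ|` is uniform on `[0, 1]`: the cone `|a·x| < t ‖x‖` inside the
unit ball has volume `(4π/3) t`, as slicing it orthogonally to `a` shows. Hence, of two independent
points, the one with the larger `|a·λ|` has density `2 |a·λ|` with respect to the uniform
distribution.

A joint distribution of two signs is determined by their means and their correlation. Both means
vanish, the density being even. The factor `|a·λ|` of the density turns `sgn (a·λ)` into
`a·λ`, so the correlation is `-2 ∫ (a·λ) sgn (b·λ)`; by reflection in the axis `b` only the
component of `a` along `b` contributes, which leaves `-2 (a·b) ∫ |b·λ| = -a·b`.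
-/

local notation "ℝ³" => EuclideanSpace ℝ (Fin 3)

open Module Set
open scoped Pointwise

section Integration

variable {X F : Type*} [MeasurableSpace X] [NormedAddCommGroup F] [NormedSpace ℝ F] {μ : Measure X}

theorem integral_eq_zero_of_ae_comp_eq_neg {T : X ≃ᵐ X} (hT : MeasurePreserving T μ μ) {f : X → F}
    (hf : ∀ᵐ x ∂μ, f (T x) = -f x) : ∫ x, f x ∂μ = 0 := by
  have : IsAddTorsionFree F := .of_isTorsionFree ℝ F
  rw [← self_eq_neg, ← integral_neg, ← integral_congr_ae hf, hT.integral_comp']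

theorem eq_volume_restrict_Icc_of_Iio {μ : Measure ℝ} [IsProbabilityMeasure μ]
    (h : ∀ t ≤ 1, μ (Iio t) = ENNReal.ofReal t) : μ = volume.restrict (Icc 0 1) := by
  refine ext_of_generate_finite _
    ((borel_eq_generateFrom_Iio ℝ).symm ▸ BorelSpace.measurable_eq) isPiSystem_Iio ?_ (by simp)
  rintro _ ⟨t, rfl⟩
  rw [Measure.restrict_apply measurableSet_Iio, inter_comm]
  rcases le_or_gt t 1 with ht | ht
  · have : Icc 0 1 ∩ Iio t = Ico 0 t := by grind
    rw [h t ht, this, Real.volume_Ico, sub_zero]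
  · have hle : (1 : ENNReal) ≤ μ (Iio t) := by
      simpa [h 1 le_rfl] using measure_mono (μ := μ) (Iio_subset_Iio ht.le)
    have : Icc 0 1 ∩ Iio t = Icc 0 1 := inter_eq_left.2 fun u hu => hu.2.trans_lt ht
    rw [this, Real.volume_Icc, sub_zero, ENNReal.ofReal_one]
    exact le_antisymm prob_le_one hle

theorem map_prod_ite_le {α : Type*} [LinearOrder α] [TopologicalSpace α] [OrderClosedTopology α]
    [SecondCountableTopology α] [MeasurableSpace α] [OpensMeasurableSpace α] [SFinite μ]
    {f : X → α} (hf : Measurable f) :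
    (μ.prod μ).map (fun p => if f p.2 ≤ f p.1 then p.1 else p.2) =
      μ.withDensity fun x => μ {y | f y ≤ f x} + μ {y | f y < f x} := by
  have hle : MeasurableSet {p : X × X | f p.2 ≤ f p.1} :=
    measurableSet_le (by fun_prop) (by fun_prop)
  have hlt : MeasurableSet {p : X × X | f p.1 < f p.2} :=
    measurableSet_lt (by fun_prop) (by fun_prop)
  have hmeas : Measurable fun x => μ {y | f y ≤ f x} := measurable_measure_prodMk_left hle
  ext s hs
  have hfst : (μ.prod μ) ({p | f p.2 ≤ f p.1} ∩ s ×ˢ univ) = ∫⁻ x in s, μ {y | f y ≤ f x} ∂μ := by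
    rw [← Measure.restrict_apply hle, ← Measure.prod_restrict, Measure.restrict_univ,
      Measure.prod_apply hle]
    rfl
  have hsnd : (μ.prod μ) ({p | f p.1 < f p.2} ∩ univ ×ˢ s) = ∫⁻ y in s, μ {x | f x < f y} ∂μ := by
    rw [← Measure.restrict_apply hlt, ← Measure.prod_restrict, Measure.restrict_univ,
      Measure.prod_apply_symm hlt]
    rfl
  rw [Measure.map_apply (.ite hle measurable_fst measurable_snd) hs, withDensity_apply _ hs,
    lintegral_add_left hmeas, ← hfst, ← hsnd, ← measure_inter_add_sdiff _ hle]
  congr 2 <;> ext p <;> by_cases hp : f p.2 ≤ f p.1 <;> simp [hp, not_lt.2, not_le.1]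

theorem map_prod_ite_le_of_uniform [SFinite μ] {f : X → ℝ} (hf : Measurable f)
    (hμ : μ.map f = volume.restrict (Icc 0 1)) :
    (μ.prod μ).map (fun p => if f p.2 ≤ f p.1 then p.1 else p.2) =
      μ.withDensity fun x => ENNReal.ofReal (2 * f x) := by
  rw [map_prod_ite_le hf]
  have hrange : ∀ᵐ x ∂μ, f x ∈ Icc 0 1 :=
    ae_of_ae_map hf.aemeasurable (hμ ▸ ae_restrict_mem measurableSet_Icc)
  refine withDensity_congr_ae (hrange.mono fun x hx => ?_)
  have hle : μ {y | f y ≤ f x} = ENNReal.ofReal (f x) := by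
    have : Iic (f x) ∩ Icc 0 1 = Icc 0 (f x) := by grind
    change μ (f ⁻¹' Iic (f x)) = _
    rw [← Measure.map_apply hf measurableSet_Iic, hμ, Measure.restrict_apply measurableSet_Iic,
      this, Real.volume_Icc, sub_zero]
  have hlt : μ {y | f y < f x} = ENNReal.ofReal (f x) := by
    have : Iio (f x) ∩ Icc 0 1 = Ico 0 (f x) := by grind
    change μ (f ⁻¹' Iio (f x)) = _
    rw [← Measure.map_apply hf measurableSet_Iio, hμ, Measure.restrict_apply measurableSet_Iio,
      this, Real.volume_Ico, sub_zero]
  simp only [hle, hlt]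
  rw [← ENNReal.ofReal_add hx.1 hx.1, two_mul]

theorem measure_eq_and_eq_of_sign [IsProbabilityMeasure μ] {A B : X → ℝ} (hA : Measurable A)
    (hB : Measurable B) (hA' : ∀ x, A x = 1 ∨ A x = -1) (hB' : ∀ x, B x = 1 ∨ B x = -1) {α β : ℝ}
    (hα : α = 1 ∨ α = -1) (hβ : β = 1 ∨ β = -1) :
    μ {x | A x = α ∧ B x = β} = ENNReal.ofReal
      ((1 + α * ∫ x, A x ∂μ + β * ∫ x, B x ∂μ + α * β * ∫ x, A x * B x ∂μ) / 4) := by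
  have hs : MeasurableSet {x | A x = α ∧ B x = β} :=
    (hA (measurableSet_singleton α)).inter (hB (measurableSet_singleton β))
  have hindicator (x : X) : {x | A x = α ∧ B x = β}.indicator 1 x =
      1 / 4 * (1 + α * A x + β * B x + α * β * (A x * B x)) := by
    simp only [indicator_apply, mem_ofPred_eq, Pi.one_apply]
    rcases hα with rfl | rfl <;> rcases hβ with rfl | rfl <;> rcases hA' x with h | h <;>
      rcases hB' x with h' | h' <;> simp only [h, h'] <;> norm_num
  have hintA : Integrable A μ :=
    .of_bound hA.aestronglyMeasurable 1 (.of_forall fun x => by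
      rcases hA' x with h | h <;> simp [h])
  have hintB : Integrable B μ :=
    .of_bound hB.aestronglyMeasurable 1 (.of_forall fun x => by
      rcases hB' x with h | h <;> simp [h])
  have hintAB : Integrable (fun x => A x * B x) μ :=
    .of_bound (hA.mul hB).aestronglyMeasurable 1 (.of_forall fun x => by
      rcases hA' x with h | h <;> rcases hB' x with h' | h' <;> simp [h, h'])
  rw [← ofReal_measureReal, ← integral_indicator_one hs, integral_congr_ae (.of_forall hindicator),
    integral_const_mul, integral_add (by fun_prop) (by fun_prop),
    integral_add (by fun_prop) (by fun_prop), integral_add (by fun_prop) (by fun_prop)]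
  simp only [integral_const_mul, integral_const, probReal_univ, one_smul]
  congr 1
  ring

end Integration

section Sgn

theorem sgn_eq_one_or_eq_neg_one (x : ℝ) : sgn x = 1 ∨ sgn x = -1 :=
  ite_eq_or_eq ..

theorem abs_sgn (x : ℝ) : |sgn x| = 1 := by
  rcases sgn_eq_one_or_eq_neg_one x with h | h <;> simp [h]

theorem self_mul_sgn (x : ℝ) : x * sgn x = |x| := by
  unfold sgn
  split_ifs with h
  · rw [abs_of_nonneg h, mul_one]
  · rw [abs_of_neg (not_le.1 h), mul_neg_one]

theorem abs_mul_sgn (x : ℝ) : |x| * sgn x = x := by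
  rw [← self_mul_sgn, mul_assoc, ← abs_mul_abs_self (sgn x), abs_sgn, mul_one, mul_one]

theorem sgn_neg {x : ℝ} (hx : x ≠ 0) : sgn (-x) = -sgn x := by
  rcases hx.lt_or_gt with h | h <;> simp [sgn, h.le, h.not_ge]

@[fun_prop]
theorem measurable_sgn : Measurable sgn :=
  .ite measurableSet_Ici measurable_const measurable_const

end Sgn

section SphereMeasure

variable {E : Type*} [NormedAddCommGroup E] [NormedSpace ℝ E]

theorem Ioo_smul_sphere_inter_cone {C : Set E}
    (hC : ∀ ⦃r : ℝ⦄, 0 < r → ∀ x ∈ C, r • x ∈ C) :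
    Ioo (0 : ℝ) 1 • (sphere 0 1 ∩ C) = C ∩ (ball 0 1 \ {0}) := by
  ext x
  constructor
  · rintro ⟨r, hr, y, ⟨hy, hyC⟩, rfl⟩
    have hmem : r • y ∈ Ioo (0 : ℝ) 1 • sphere (0 : E) 1 := smul_mem_smul hr hy
    rw [Ioo_smul_sphere_zero le_rfl one_pos] at hmem
    exact ⟨hC hr.1 y hyC, by simpa using hmem⟩
  · rintro ⟨hxC, hx1, hx0⟩
    have hx : 0 < ‖x‖ := norm_pos_iff.2 hx0
    exact ⟨‖x‖, ⟨hx, mem_ball_zero_iff.1 hx1⟩, ‖x‖⁻¹ • x,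
      ⟨by simp [norm_smul, hx.ne'], hC (inv_pos.2 hx) x hxC⟩, smul_inv_smul₀ hx.ne' x⟩

variable [MeasurableSpace E] [BorelSpace E]

theorem toSphere_preimage_cone (μ : Measure E) [NullSingletonClass μ] {C : Set E}
    (hmeas : MeasurableSet C) (hC : ∀ ⦃r : ℝ⦄, 0 < r → ∀ x ∈ C, r • x ∈ C) :
    μ.toSphere ((↑) ⁻¹' C) = finrank ℝ E * μ (C ∩ ball 0 1) := by
  rw [μ.toSphere_apply' (measurable_subtype_coe hmeas), Subtype.image_preimage_coe,
    Ioo_smul_sphere_inter_cone hC, ← inter_sdiff_assoc, measure_sdiff_null (measure_singleton 0)]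

/-- The self-map of the unit sphere induced by a linear isometry equivalence, as a measurable
equivalence. -/
def sphereEquiv (g : E ≃ₗᵢ[ℝ] E) : sphere (0 : E) 1 ≃ᵐ sphere (0 : E) 1 :=
  (g.toHomeomorph.subtype fun x => by simp).toMeasurableEquiv

@[simp]
theorem coe_sphereEquiv (g : E ≃ₗᵢ[ℝ] E) (x : sphere (0 : E) 1) :
    (sphereEquiv g x : E) = g x :=
  rfl

/-- Invariance of a measure on the unit sphere under the whole orthogonal group: the only property
of the uniform distribution that the symmetry arguments use. -/
def IsometryInvariant (μ : Measure (sphere (0 : E) 1)) : Prop :=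
  ∀ g : E ≃ₗᵢ[ℝ] E, MeasurePreserving (sphereEquiv g) μ μ

theorem measurePreserving_sphereEquiv_toSphere {μ : Measure E} {g : E ≃ₗᵢ[ℝ] E}
    (hg : MeasurePreserving g μ μ) :
    MeasurePreserving (sphereEquiv g) μ.toSphere μ.toSphere := by
  refine ⟨(sphereEquiv g).measurable, Measure.ext fun s hs => ?_⟩
  have hcone : Ioo (0 : ℝ) 1 • ((↑) '' (sphereEquiv g ⁻¹' s)) =
      g ⁻¹' (Ioo (0 : ℝ) 1 • ((↑) '' s)) := by
    ext x
    simp only [mem_smul, mem_image, mem_preimage]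
    constructor
    · rintro ⟨r, hr, _, ⟨y, hy, rfl⟩, rfl⟩
      exact ⟨r, hr, _, ⟨_, hy, rfl⟩, by simp⟩
    · rintro ⟨r, hr, _, ⟨y, hy, rfl⟩, hx⟩
      refine ⟨r, hr, _, ⟨(sphereEquiv g).symm y, by simpa, rfl⟩, g.injective ?_⟩
      rw [← hx, map_smul, ← coe_sphereEquiv, MeasurableEquiv.apply_symm_apply]
  rw [MeasurableEquiv.map_apply, μ.toSphere_apply' ((sphereEquiv g).measurable hs),
    μ.toSphere_apply' hs, hcone,
    hg.measure_preimage_emb g.toHomeomorph.toMeasurableEquiv.measurableEmbedding]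

end SphereMeasure

section Symmetry

variable {E : Type*} [NormedAddCommGroup E] [InnerProductSpace ℝ E]

theorem abs_inner_coe_sphere_le_norm (a : E) (x : sphere (0 : E) 1) : |⟪a, (x : E)⟫| ≤ ‖a‖ := by
  simpa using abs_real_inner_le_norm a (x : E)

variable [MeasurableSpace E] [BorelSpace E]

theorem isometryInvariant_toSphere_volume [FiniteDimensional ℝ E] :
    IsometryInvariant (volume : Measure E).toSphere :=
  fun g => measurePreserving_sphereEquiv_toSphere g.measurePreserving

namespace IsometryInvariant

variable {μ : Measure (sphere (0 : E) 1)}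

theorem smul (hμ : IsometryInvariant μ) (c : ℝ≥0∞) : IsometryInvariant (c • μ) :=
  fun g => (hμ g).smul_measure c

theorem integral_abs_inner_mul_sgn_inner (hμ : IsometryInvariant μ) (a : E) {b : E}
    (hb : ∀ᵐ x : sphere (0 : E) 1 ∂μ, ⟪b, (x : E)⟫ ≠ 0) :
    ∫ x : sphere (0 : E) 1, |⟪a, (x : E)⟫| * sgn ⟪b, (x : E)⟫ ∂μ = 0 := by
  refine integral_eq_zero_of_ae_comp_eq_neg (hμ (.neg ℝ)) (hb.mono fun x hx => ?_)
  simp [sgn_neg hx]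

theorem integral_inner_mul_sgn_inner [IsFiniteMeasure μ] (hμ : IsometryInvariant μ) (a : E) {b : E}
    (hb : ‖b‖ = 1) :
    ∫ x : sphere (0 : E) 1, ⟪a, (x : E)⟫ * sgn ⟪b, (x : E)⟫ ∂μ =
      ⟪a, b⟫ * ∫ x : sphere (0 : E) 1, |⟪b, (x : E)⟫| ∂μ := by
  have hint (c : E) : Integrable (fun x : sphere (0 : E) 1 => ⟪c, (x : E)⟫ * sgn ⟪b, (x : E)⟫) μ :=
    .of_bound (Measurable.aestronglyMeasurable (by fun_prop)) ‖c‖ (.of_forall fun x => by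
      simpa [abs_sgn] using abs_inner_coe_sphere_le_norm c x)
  rw [← integral_const_mul, ← sub_eq_zero]
  simp_rw [← self_mul_sgn]
  rw [← integral_sub (hint a) ((hint b).const_mul _)]
  let g : E ≃ₗᵢ[ℝ] E := (ℝ ∙ b).reflection
  have hg (x : E) : g x = (2 * ⟪b, x⟫) • b - x := by
    simp [g, Submodule.reflection_singleton_apply, hb, two_smul, two_mul, add_smul]
  refine integral_eq_zero_of_ae_comp_eq_neg (hμ g) (.of_forall fun x => ?_)
  have hgb : ⟪b, g x⟫ = ⟪b, (x : E)⟫ := by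
    rw [hg, inner_sub_right, inner_smul_right, real_inner_self_eq_norm_sq, hb]
    ring
  rw [coe_sphereEquiv, hgb, hg, inner_sub_right, inner_smul_right]
  ring

end IsometryInvariant

end Symmetry

section Archimedes

theorem exists_measurePreserving_inner_prod {E : Type*} [NormedAddCommGroup E]
    [InnerProductSpace ℝ E] [FiniteDimensional ℝ E] [MeasurableSpace E] [BorelSpace E] {n : ℕ}
    (hn : finrank ℝ E = n + 1) {a : E} (ha : ‖a‖ = 1) :
    ∃ φ : E → ℝ × EuclideanSpace ℝ (Fin n), MeasurePreserving φ ∧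
      ∀ x, (φ x).1 = ⟪a, x⟫ ∧ ‖x‖ ^ 2 = (φ x).1 ^ 2 + ‖(φ x).2‖ ^ 2 := by
  have ha' : Orthonormal ℝ (({0} : Set (Fin (n + 1))).domRestrict fun _ => a) :=
    ⟨fun _ => ha, fun i j hij => absurd (Subsingleton.elim i j) hij⟩
  obtain ⟨e, he⟩ := ha'.exists_orthonormalBasis_extension_of_card_eq (by simp [hn])
  have he0 : e 0 = a := he 0 rfl
  refine ⟨_, ((MeasurePreserving.id volume).prod (PiLp.volume_preserving_toLp (Fin n))).comp
    ((volume_preserving_piFinSuccAbove (fun _ : Fin (n + 1) => ℝ) 0).comp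
    ((PiLp.volume_preserving_ofLp (Fin (n + 1))).comp e.measurePreserving_repr)),
    fun x => ⟨?_, ?_⟩⟩
  · simp [MeasurableEquiv.piFinSuccAbove, ← he0, e.repr_apply_apply]
  · rw [← e.repr.norm_map x, EuclideanSpace.norm_sq_eq, EuclideanSpace.norm_sq_eq]
    simp [MeasurableEquiv.piFinSuccAbove, Fin.sum_univ_succ, Fin.tail]

theorem volume_annulus {r R : ℝ} (hr : 0 ≤ r) :
    volume {y : EuclideanSpace ℝ (Fin 2) | ‖y‖ ^ 2 ∈ Ioo r R} =
      ENNReal.ofReal (Real.pi * (R - r)) := by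
  have hsdiff : {y : EuclideanSpace ℝ (Fin 2) | ‖y‖ ^ 2 ∈ Ioo r R} =
      ball 0 √R \ closedBall 0 √r := by
    ext y
    simp [Real.lt_sqrt, Real.sqrt_lt hr, and_comm]
  rw [hsdiff]
  rcases lt_or_ge r R with h | h
  · rw [measure_sdiff (closedBall_subset_ball (Real.sqrt_lt_sqrt hr h))
      measurableSet_closedBall.nullMeasurableSet measure_closedBall_lt_top.ne,
      EuclideanSpace.volume_ball_fin_two, EuclideanSpace.volume_closedBall_fin_two,
      ← ENNReal.ofReal_pow (Real.sqrt_nonneg _), ← ENNReal.ofReal_pow (Real.sqrt_nonneg _),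
      Real.sq_sqrt hr, Real.sq_sqrt (hr.trans h.le), ← ENNReal.ofReal_mul (hr.trans h.le),
      ← ENNReal.ofReal_mul hr, ← ENNReal.ofReal_sub _ (by positivity), mul_sub, mul_comm R,
      mul_comm r]
  · have hempty : ball (0 : EuclideanSpace ℝ (Fin 2)) √R \ closedBall 0 √r = ∅ :=
      sdiff_eq_empty.2 (ball_subset_closedBall.trans
        (closedBall_subset_closedBall (Real.sqrt_le_sqrt h)))
    rw [hempty, measure_empty, ENNReal.ofReal_of_nonpos
      (mul_nonpos_of_nonneg_of_nonpos Real.pi_nonneg (sub_nonpos.2 h))]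

theorem lintegral_one_sub_sq_div_sq {t : ℝ} (ht : 0 < t) :
    ∫⁻ u : ℝ, ENNReal.ofReal (1 - u ^ 2 / t ^ 2) = ENNReal.ofReal (4 / 3 * t) := by
  have hsupp : Function.support (fun u : ℝ => ENNReal.ofReal (1 - u ^ 2 / t ^ 2)) ⊆ Ioc (-t) t := by
    intro u hu
    rw [Function.mem_support, ne_eq, ENNReal.ofReal_eq_zero, not_le, sub_pos,
      div_lt_one (by positivity)] at hu
    exact Ioo_subset_Ioc_self (abs_lt.1 (abs_lt_of_sq_lt_sq hu ht.le))
  have hnonneg : ∀ᵐ u ∂volume.restrict (Ioc (-t) t), 0 ≤ 1 - u ^ 2 / t ^ 2 := by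
    filter_upwards [ae_restrict_mem measurableSet_Ioc] with u hu
    exact sub_nonneg.2 (div_le_one_of_le₀ (sq_le_sq' hu.1.le hu.2) (sq_nonneg t))
  have hint : ∫ u in -t..t, (1 - u ^ 2 / t ^ 2) = 4 / 3 * t := by
    rw [intervalIntegral.integral_sub (by simp) (Continuous.intervalIntegrable (by fun_prop) _ _),
      intervalIntegral.integral_div, integral_pow, intervalIntegral.integral_const, smul_eq_mul]
    norm_num
    field_simp
    ring
  rw [← setLIntegral_eq_of_support_subset hsupp,
    ← ofReal_integral_eq_lintegral_ofReal (Continuous.integrableOn_Ioc (by fun_prop)) hnonneg,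
    ← intervalIntegral.integral_of_le (by linarith), hint]

theorem volume_cone_inter_ball {a : ℝ³} (ha : ‖a‖ = 1) {t : ℝ} (ht : 0 < t) (ht1 : t ≤ 1) :
    volume ({x : ℝ³ | |⟪a, x⟫| < t * ‖x‖} ∩ ball 0 1) = ENNReal.ofReal (4 * Real.pi / 3 * t) := by
  obtain ⟨φ, hφ, hφx⟩ := exists_measurePreserving_inner_prod (n := 2) (by simp) ha
  let S (u : ℝ) : Set (EuclideanSpace ℝ (Fin 2)) :=
    {y | ‖y‖ ^ 2 ∈ Ioo (u ^ 2 / t ^ 2 - u ^ 2) (1 - u ^ 2)}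
  let T : Set (ℝ × EuclideanSpace ℝ (Fin 2)) := {p | p.2 ∈ S p.1}
  have hT : MeasurableSet T := by
    simp only [T, S, mem_Ioo, Set.ofPred_and]
    exact (measurableSet_lt (by fun_prop) (by fun_prop)).inter
      (measurableSet_lt (by fun_prop) (by fun_prop))
  have hpre : {x : ℝ³ | |⟪a, x⟫| < t * ‖x‖} ∩ ball 0 1 = φ ⁻¹' T := by
    ext x
    obtain ⟨hfst, hnorm⟩ := hφx x
    have hcone : |⟪a, x⟫| < t * ‖x‖ ↔ (φ x).1 ^ 2 / t ^ 2 - (φ x).1 ^ 2 < ‖(φ x).2‖ ^ 2 := by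
      rw [sub_lt_iff_lt_add', ← hnorm, div_lt_iff₀' (by positivity), ← mul_pow, hfst, sq_lt_sq,
        abs_of_nonneg (mul_nonneg ht.le (norm_nonneg x))]
    have hball : ‖x‖ < 1 ↔ ‖(φ x).2‖ ^ 2 < 1 - (φ x).1 ^ 2 := by
      rw [lt_sub_iff_add_lt', ← hnorm, sq_lt_one_iff₀ (norm_nonneg x)]
    simp only [mem_inter_iff, mem_ofPred_eq, mem_ball_zero_iff, hcone, hball, mem_preimage, T, S,
      mem_Ioo]
  have hslice (u : ℝ) :
      volume (S u) = ENNReal.ofReal Real.pi * ENNReal.ofReal (1 - u ^ 2 / t ^ 2) := by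
    have hu : u ^ 2 ≤ u ^ 2 / t ^ 2 :=
      le_div_self (sq_nonneg u) (by positivity) (pow_le_one₀ ht.le ht1)
    rw [volume_annulus (sub_nonneg.2 hu), sub_sub_sub_cancel_right,
      ENNReal.ofReal_mul Real.pi_nonneg]
  rw [hpre, hφ.measure_preimage hT.nullMeasurableSet, Measure.volume_eq_prod,
    Measure.prod_apply hT]
  change ∫⁻ u, volume (S u) = _
  simp_rw [hslice]
  rw [lintegral_const_mul _ (by fun_prop), lintegral_one_sub_sq_div_sq ht,
    ← ENNReal.ofReal_mul Real.pi_nonneg]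
  congr 1
  ring

theorem uniformSphere_abs_inner_lt {a : ℝ³} (ha : ‖a‖ = 1) {t : ℝ} (ht1 : t ≤ 1) :
    uniformSphere {x : Sphere2 | |⟪a, (x : ℝ³)⟫| < t} = ENNReal.ofReal t := by
  rcases le_or_gt t 0 with ht | ht
  · have : {x : Sphere2 | |⟪a, (x : ℝ³)⟫| < t} = ∅ :=
      eq_empty_of_forall_notMem fun x hx => (ht.trans (abs_nonneg _)).not_gt hx
    rw [this, measure_empty, ENNReal.ofReal_of_nonpos ht]
  let C : Set ℝ³ := {x | |⟪a, x⟫| < t * ‖x‖}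
  have hC : ∀ ⦃r : ℝ⦄, 0 < r → ∀ x ∈ C, r • x ∈ C := fun r hr x hx => by
    simpa [C, inner_smul_right, abs_mul, norm_smul, abs_of_pos hr, mul_left_comm t, hr] using hx
  have hpre : {x : Sphere2 | |⟪a, (x : ℝ³)⟫| < t} = (↑) ⁻¹' C := by
    ext x
    simp [C]
  rw [uniformSphere, sphereMeasure, Measure.smul_apply, hpre, toSphere_preimage_cone _
    (measurableSet_lt (by fun_prop) (by fun_prop)) hC, volume_cone_inter_ball ha ht ht1,
    finrank_euclideanSpace_fin, Nat.cast_ofNat, smul_eq_mul, ← ENNReal.ofReal_ofNat 3,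
    ← ENNReal.ofReal_inv_of_pos (by positivity), ← ENNReal.ofReal_mul (by norm_num),
    ← ENNReal.ofReal_mul (by positivity)]
  congr 1
  field_simp

instance : IsProbabilityMeasure uniformSphere where
  measure_univ := by
    rw [uniformSphere, sphereMeasure, Measure.smul_apply, Measure.toSphere_apply_univ,
      EuclideanSpace.volume_ball_fin_three, finrank_euclideanSpace_fin, Nat.cast_ofNat,
      smul_eq_mul, ENNReal.ofReal_one, one_pow, one_mul, ← ENNReal.ofReal_ofNat 3,
      ← ENNReal.ofReal_mul (by norm_num), ← ENNReal.ofReal_inv_of_pos (by positivity),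
      ← ENNReal.ofReal_mul (by positivity), ENNReal.ofReal_eq_one]
    field_simp

theorem map_abs_inner_uniformSphere {a : ℝ³} (ha : ‖a‖ = 1) :
    uniformSphere.map (fun x : Sphere2 => |⟪a, (x : ℝ³)⟫|) = volume.restrict (Icc 0 1) := by
  have hmeas : Measurable fun x : Sphere2 => |⟪a, (x : ℝ³)⟫| := by fun_prop
  have := Measure.isProbabilityMeasure_map (μ := uniformSphere) hmeas.aemeasurable
  refine eq_volume_restrict_Icc_of_Iio fun t ht => ?_
  rw [Measure.map_apply hmeas measurableSet_Iio]
  exact uniformSphere_abs_inner_lt ha ht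

theorem integral_abs_inner_uniformSphere {a : ℝ³} (ha : ‖a‖ = 1) :
    ∫ x : Sphere2, |⟪a, (x : ℝ³)⟫| ∂uniformSphere = 1 / 2 := by
  have hmeas : Measurable fun x : Sphere2 => |⟪a, (x : ℝ³)⟫| := by fun_prop
  rw [← integral_map (f := fun t : ℝ => t) hmeas.aemeasurable (by fun_prop),
    map_abs_inner_uniformSphere ha, integral_Icc_eq_integral_Ioc,
    ← intervalIntegral.integral_of_le zero_le_one, integral_id]
  norm_num

theorem ae_inner_ne_zero_uniformSphere {a : ℝ³} (ha : ‖a‖ = 1) :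
    ∀ᵐ x : Sphere2 ∂uniformSphere, ⟪a, (x : ℝ³)⟫ ≠ 0 := by
  have hmeas : Measurable fun x : Sphere2 => |⟪a, (x : ℝ³)⟫| := by fun_prop
  have hne : ∀ᵐ t ∂uniformSphere.map (fun x : Sphere2 => |⟪a, (x : ℝ³)⟫|), t ≠ 0 := by
    rw [map_abs_inner_uniformSphere ha]
    exact Measure.ae_ne _ 0
  exact (ae_of_ae_map hmeas.aemeasurable hne).mono fun x => abs_ne_zero.1

theorem isometryInvariant_uniformSphere : IsometryInvariant uniformSphere :=
  isometryInvariant_toSphere_volume.smul _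

end Archimedes

section Protocol

instance : IsProbabilityMeasure pairMeasure :=
  inferInstanceAs (IsProbabilityMeasure (uniformSphere.prod uniformSphere))

@[fun_prop]
theorem measurable_choice (a : ℝ³) : Measurable (choice a) :=
  .ite (measurableSet_le (by fun_prop) (by fun_prop)) measurable_fst measurable_snd

theorem map_choice_pairMeasure {a : ℝ³} (ha : ‖a‖ = 1) :
    pairMeasure.map (choice a) =
      uniformSphere.withDensity fun x => ENNReal.ofReal (2 * |⟪a, (x : ℝ³)⟫|) :=
  map_prod_ite_le_of_uniform (by fun_prop) (map_abs_inner_uniformSphere ha)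

theorem integral_comp_choice {a : ℝ³} (ha : ‖a‖ = 1) {f : Sphere2 → ℝ} (hf : Measurable f) :
    ∫ p, f (choice a p) ∂pairMeasure =
      2 * ∫ x : Sphere2, |⟪a, (x : ℝ³)⟫| * f x ∂uniformSphere := by
  rw [← integral_map (by fun_prop) hf.aestronglyMeasurable, map_choice_pairMeasure ha,
    integral_withDensity_eq_integral_toReal_smul (by fun_prop)
      (.of_forall fun _ => ENNReal.ofReal_lt_top), ← integral_const_mul]
  refine integral_congr_ae (.of_forall fun x => ?_)
  simp [mul_assoc]

theorem integral_sgn_inner_choice {a b : ℝ³} (ha : ‖a‖ = 1) (hb : ‖b‖ = 1) :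
    ∫ p, sgn ⟪b, (choice a p : ℝ³)⟫ ∂pairMeasure = 0 := by
  rw [integral_comp_choice ha (f := fun x => sgn ⟪b, (x : ℝ³)⟫) (by fun_prop),
    isometryInvariant_uniformSphere.integral_abs_inner_mul_sgn_inner a
      (ae_inner_ne_zero_uniformSphere hb), mul_zero]

theorem integral_sgn_inner_choice_mul_sgn_inner_choice {a b : ℝ³} (ha : ‖a‖ = 1) (hb : ‖b‖ = 1) :
    ∫ p, sgn ⟪a, (choice a p : ℝ³)⟫ * sgn ⟪b, (choice a p : ℝ³)⟫ ∂pairMeasure = ⟪a, b⟫ := by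
  rw [integral_comp_choice ha (f := fun x => sgn ⟪a, (x : ℝ³)⟫ * sgn ⟪b, (x : ℝ³)⟫) (by fun_prop)]
  simp_rw [← mul_assoc, abs_mul_sgn]
  rw [isometryInvariant_uniformSphere.integral_inner_mul_sgn_inner a hb,
    integral_abs_inner_uniformSphere hb]
  ring

end Protocol

/-- **Correctness of the one-bit communication protocol.** With `λ₀, λ₁` independent
uniform on `S²`, `λ_s` given by the choice method, and outputs `A = -sgn(a·λ_s)`,
`B = sgn(b·λ_s)`, one has `P(A = α, B = β) = (1 - αβ a·b)/4` for all
`α, β ∈ {-1, 1}`: the protocol reproduces the singlet joint distribution. -/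
theorem communication_protocol_correct (a b : EuclideanSpace ℝ (Fin 3))
    (ha : ‖a‖ = 1) (hb : ‖b‖ = 1) (α β : ℝ)
    (hα : α = 1 ∨ α = -1) (hβ : β = 1 ∨ β = -1) :
    pairMeasure {p : Sphere2 × Sphere2 |
        -sgn ⟪a, ((choice a p : Sphere2) : EuclideanSpace ℝ (Fin 3))⟫ = α ∧
        sgn ⟪b, ((choice a p : Sphere2) : EuclideanSpace ℝ (Fin 3))⟫ = β}
      = ENNReal.ofReal ((1 - α * β * ⟪a, b⟫) / 4) := by
  have hA (p : Sphere2 × Sphere2) :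
      -sgn ⟪a, (choice a p : ℝ³)⟫ = 1 ∨ -sgn ⟪a, (choice a p : ℝ³)⟫ = -1 := by
    simpa [neg_eq_iff_eq_neg, or_comm] using sgn_eq_one_or_eq_neg_one ⟪a, (choice a p : ℝ³)⟫
  rw [measure_eq_and_eq_of_sign (by fun_prop) (by fun_prop) hA
    (fun p => sgn_eq_one_or_eq_neg_one _) hα hβ]
  simp_rw [neg_mul, integral_neg]
  rw [integral_sgn_inner_choice ha ha, integral_sgn_inner_choice ha hb,
    integral_sgn_inner_choice_mul_sgn_inner_choice ha hb]
  congr 1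
  ring
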